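/- Let X and Y be pseudocompact Tychonoff spaces and let φ : C*_p(X) → C*_p(Y) be a uniform homeomorphism. For every x ∈ βX there exists y ∈ K(x) with x ∈ K(y), where K(x) ⊆ βY is the support defined via φ^{-1} and K(y) ⊆ βX the support defined via φ. -/

import Mathlib

open scoped ENNReal

/-- `C*(X)`: bounded continuous real-valued functions on `X`; as a subtype of `X → ℝ` it
inherits the uniformity (and topology) of pointwise convergence, giving `C*_p(X)`. -/
abbrev Cstar (X : Type*) [TopologicalSpace X] : Type _ :=
  {f : X → ℝ // Continuous f ∧ ∃ M : ℝ, ∀ x, |f x| ≤ M}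

/-- Given extension operators `eX`, `eY` to the Čech–Stone compactifications and a map
`φ : C*(X) → C*(Y)`, `aFn eX eY φ y K` is
`sup { |φ(f)~(y) − φ(g)~(y)| : f, g ∈ C*(X), |f~ − g~| < 1 on K }` (valued in `ℝ≥0∞`). -/
noncomputable def aFn {X Y : Type*} [TopologicalSpace X] [TopologicalSpace Y]
    (eX : Cstar X → C(StoneCech X, ℝ)) (eY : Cstar Y → C(StoneCech Y, ℝ))
    (φ : Cstar X → Cstar Y) (y : StoneCech Y) (K : Set (StoneCech X)) : ℝ≥0∞ :=
  ⨆ (p : Cstar X × Cstar X) (_ : ∀ x ∈ K, |eX p.1 x - eX p.2 x| < 1),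
    ENNReal.ofReal |eY (φ p.1) y - eY (φ p.2) y|

/-- Boundedness of `a(y, K)` for a map between spaces of continuous functions. -/
def Bd {A B : Type*} [TopologicalSpace A] [TopologicalSpace B]
    (Φ : C(A, ℝ) → C(B, ℝ)) (y : B) (K : Set A) : Prop :=
  ∃ C : ℝ, ∀ F G : C(A, ℝ), (∀ x ∈ K, |F x - G x| < 1) → |Φ F y - Φ G y| ≤ C

theorem chain_bd {A B : Type*} [TopologicalSpace A] [TopologicalSpace B]
    (Φ : C(A, ℝ) → C(B, ℝ)) (y : B) (K : Set A) (ε C : ℝ)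
    (h : ∀ F G : C(A, ℝ), (∀ x ∈ K, |F x - G x| < ε) → |Φ F y - Φ G y| ≤ C) (n : ℕ) :
    ∀ F G : C(A, ℝ), (∀ x ∈ K, |F x - G x| < (n + 1) * ε) →
      |Φ F y - Φ G y| ≤ (n + 1) * C := by
  induction n with
  | zero => intro F G hFG; simpa using h F G (by simpa using hFG)
  | succ n ih =>
    intro F G hFG
    have hn : (0 : ℝ) < (n : ℝ) + 1 + 1 := by positivity
    let H : C(A, ℝ) := F + (1 / ((n : ℝ) + 1 + 1)) • (G - F)
    have h1 := h F H (by
      intro x hx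
      have := hFG x hx
      push_cast at this
      have e : F x - H x = (F x - G x) / ((n : ℝ) + 1 + 1) := by
        simp [H]; field_simp; ring
      rw [e, abs_div, abs_of_pos hn, div_lt_iff₀ hn]; linarith)
    have h2 := ih H G (by
      intro x hx
      have := hFG x hx
      push_cast at this
      have e : H x - G x = ((n : ℝ) + 1) * ((F x - G x) / ((n : ℝ) + 1 + 1)) := by
        simp [H]; field_simp; ring
      have hn1 : (0 : ℝ) < (n : ℝ) + 1 := by positivity
      rw [e, abs_mul, abs_of_pos hn1, abs_div, abs_of_pos hn]
      apply mul_lt_mul_of_pos_left _ hn1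
      rw [div_lt_iff₀ hn]; linarith)
    have := abs_sub_le (Φ F y) (Φ H y) (Φ G y)
    push_cast
    linarith

theorem Bd.inter {A B : Type*} [TopologicalSpace A] [CompactSpace A] [T2Space A]
    [TopologicalSpace B] {Φ : C(A, ℝ) → C(B, ℝ)} {y : B} {K L : Set A}
    (hK : IsClosed K) (hL : IsClosed L) (bK : Bd Φ y K) (bL : Bd Φ y L) :
    Bd Φ y (K ∩ L) := by
  obtain ⟨C, hC⟩ := bK
  obtain ⟨D, hD⟩ := bL
  refine ⟨C + D, fun F G hFG => ?_⟩
  have hc : IsClosed (L ∩ {x | 1 ≤ |F x - G x|}) :=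
    hL.inter (isClosed_le continuous_const (by fun_prop))
  have hd : Disjoint (L ∩ {x | 1 ≤ |F x - G x|}) K := by
    rw [Set.disjoint_left]
    rintro x ⟨hx, h1⟩ hxK
    exact absurd (hFG x ⟨hxK, hx⟩) (not_lt.2 h1)
  obtain ⟨u, u0, u1, u01⟩ := exists_continuous_zero_one_of_isClosed hc hK hd
  let H : C(A, ℝ) := G + u * (F - G)
  have h1 := hC F H (by
    intro x hx
    have : u x = 1 := u1 hx
    simp [H, this])
  have h2 := hD H G (by
    intro x hx
    have e : H x - G x = u x * (F x - G x) := by simp [H]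
    rw [e]
    by_cases hx1 : 1 ≤ |F x - G x|
    · have : u x = 0 := u0 ⟨hx, hx1⟩
      simp [this]
    · rw [abs_mul, abs_of_nonneg (u01 x).1]
      have := (u01 x).2
      have := (u01 x).1
      nlinarith [abs_nonneg (F x - G x)])
  have := abs_sub_le (Φ F y) (Φ H y) (Φ G y)
  linarith

theorem finite_bd {A B : Type*} [TopologicalSpace A] [CompactSpace A]
    [TopologicalSpace B] (Φ : C(A, ℝ) → C(B, ℝ)) (D : Set B)
    (hD : ∀ S : Set C(B, ℝ), S.Countable → ∀ y, ∃ y' ∈ D, ∀ h ∈ S, h y' = h y)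
    (hfin : ∀ y ∈ D, ∃ K : Set A, K.Finite ∧ Bd Φ y K) (y : B) :
    ∃ K : Set A, K.Finite ∧ Bd Φ y K := by
  by_contra hcon
  have key : ∀ q : ℕ × ℕ, ∃ t : Finset (C(A, ℝ) × C(A, ℝ)),
      ∀ k : Fin q.1 → A, ∃ p ∈ t, (∀ i, |p.1 (k i) - p.2 (k i)| < 1) ∧
        (q.2 : ℝ) < |Φ p.1 y - Φ p.2 y| := by
    intro q
    let U : {p : C(A, ℝ) × C(A, ℝ) // (q.2 : ℝ) < |Φ p.1 y - Φ p.2 y|} →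
      Set (Fin q.1 → A) := fun p => {k | ∀ i, |p.1.1 (k i) - p.1.2 (k i)| < 1}
    have hU : ∀ p, IsOpen (U p) := by
      intro p
      simp only [U, Set.setOf_forall]
      exact isOpen_iInter_of_finite fun i => isOpen_lt (by fun_prop) continuous_const
    have hcov : (Set.univ : Set (Fin q.1 → A)) ⊆ ⋃ p, U p := by
      intro k _
      by_contra hk
      apply hcon
      refine ⟨Set.range k, Set.finite_range k, q.2, fun F G hFG => ?_⟩
      by_contra hlt
      exact hk (Set.mem_iUnion.2 ⟨⟨(F, G), not_le.1 hlt⟩, fun i => hFG _ ⟨i, rfl⟩⟩)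
    obtain ⟨t, ht⟩ := isCompact_univ.elim_finite_subcover U hU hcov
    classical
    refine ⟨t.image Subtype.val, fun k => ?_⟩
    obtain ⟨p, hp, hk⟩ := Set.mem_iUnion₂.1 (ht (Set.mem_univ k))
    exact ⟨p.1, Finset.mem_image_of_mem _ hp, hk, p.2⟩
  choose t ht using key
  let T : Set (C(A, ℝ) × C(A, ℝ)) := ⋃ q, (t q : Set _)
  have hT : T.Countable := Set.countable_iUnion fun q => (t q).countable_toSet
  obtain ⟨y', hy', hag⟩ := hD ((fun p => Φ p.1) '' T ∪ (fun p => Φ p.2) '' T)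
    ((hT.image _).union (hT.image _)) y
  obtain ⟨K, hK, C, hC⟩ := hfin y' hy'
  obtain ⟨n, k, hk⟩ := hK.fin_param
  obtain ⟨m, hm⟩ := exists_nat_ge C
  obtain ⟨p, hp, h1, h2⟩ := ht (n, m) k
  have hpT : p ∈ T := Set.mem_iUnion.2 ⟨_, hp⟩
  have := hC p.1 p.2 (by
    rw [← hk.2]
    rintro _ ⟨i, rfl⟩
    exact h1 i)
  rw [hag _ (Or.inl ⟨p, hpT, rfl⟩), hag _ (Or.inr ⟨p, hpT, rfl⟩)] at this
  simp only at h2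
  linarith

theorem exists_min_bd {A B : Type*} [TopologicalSpace A] [CompactSpace A] [T2Space A]
    [TopologicalSpace B] (Φ : C(A, ℝ) → C(B, ℝ)) (y : B)
    (h : ∃ K : Set A, K.Finite ∧ Bd Φ y K) :
    ∃ K : Finset A, Bd Φ y K ∧ ∀ L : Set A, IsClosed L → Bd Φ y L → (K : Set A) ⊆ L := by
  classical
  obtain ⟨K, hK, bK⟩ := h
  obtain ⟨M, hM, hmin⟩ := (wellFounded_lt (α := Finset A)).has_min
    {K : Finset A | Bd Φ y K} ⟨hK.toFinset, by simpa using bK⟩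
  refine ⟨M, hM, fun L hL bL x hx => ?_⟩
  by_contra hxL
  refine hmin (M.filter (· ∈ L)) ?_ ?_
  · have := Bd.inter M.finite_toSet.isClosed hL hM bL
    simp only [Set.mem_setOf_eq, Finset.coe_filter]
    exact this
  · exact Finset.filter_ssubset.2 ⟨x, hx, hxL⟩

theorem gdelta_meets {Y : Type*} [TopologicalSpace Y]
    (hYpc : ∀ f : Y → ℝ, Continuous f → ∃ M : ℝ, ∀ y, |f y| ≤ M)
    (S : Set C(StoneCech Y, ℝ)) (hS : S.Countable) (y : StoneCech Y) :
    ∃ y' ∈ Set.range (stoneCechUnit : Y → StoneCech Y), ∀ h ∈ S, h y' = h y := by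
  obtain ⟨s, hs⟩ := (hS.insert 0).exists_eq_range (Set.insert_nonempty _ _)
  let g : ℕ → StoneCech Y → ℝ := fun n z => (1 / 2) ^ n * min 1 |s n z - s n y|
  have g0 : ∀ n z, 0 ≤ g n z := fun n z => by positivity
  have gle : ∀ n z, g n z ≤ (1 / 2) ^ n := fun n z =>
    mul_le_of_le_one_right (by positivity) (min_le_left _ _)
  have hsum : Summable fun n : ℕ => ((1 : ℝ) / 2) ^ n := summable_geometric_two
  have gsum : ∀ z, Summable fun n => g n z := fun z =>
    Summable.of_nonneg_of_le (fun n => g0 n z) (fun n => gle n z) hsum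
  have hcont : Continuous fun z => ∑' n, g n z := by
    refine continuous_tsum (fun n => ?_) hsum (fun n z => ?_)
    · simp only [g]; fun_prop
    · rw [Real.norm_of_nonneg (g0 n z)]; exact gle n z
  by_contra hcon
  push Not at hcon
  have hpos : ∀ z : Y, 0 < ∑' n, g n (stoneCechUnit z) := by
    intro z
    obtain ⟨h, hh, hne⟩ := hcon _ ⟨z, rfl⟩
    have : h ∈ Set.range s := hs ▸ Set.mem_insert_of_mem _ hh
    obtain ⟨n, rfl⟩ := this
    refine (gsum _).tsum_pos (fun n => g0 n _) n ?_
    have : 0 < |s n (stoneCechUnit z) - s n y| := abs_pos.2 (sub_ne_zero.2 hne)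
    simp only [g]
    positivity
  obtain ⟨M, hM⟩ := hYpc (fun z => (∑' n, g n (stoneCechUnit z))⁻¹)
    ((hcont.comp continuous_stoneCechUnit).inv₀ fun z => (hpos z).ne')
  have hy : (1 : ℝ) ≤ (∑' n, g n y) * M := by
    have hcl : IsClosed {w | (1 : ℝ) ≤ (∑' n, g n w) * M} :=
      isClosed_le continuous_const (hcont.mul continuous_const)
    have : ∀ w, w ∈ {w | (1 : ℝ) ≤ (∑' n, g n w) * M} := by
      intro w
      refine denseRange_stoneCechUnit.induction_on w hcl (fun z => ?_)
      have h1 := hM z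
      rw [abs_of_pos (inv_pos.2 (hpos z))] at h1
      have := mul_le_mul_of_nonneg_left h1 (hpos z).le
      rwa [mul_inv_cancel₀ (hpos z).ne'] at this
    exact this y
  have : ∑' n, g n y = 0 := by simp [g]
  rw [this] at hy
  norm_num at hy

/-- Restriction of a continuous function on the compactification. -/
def restr {X : Type*} [TopologicalSpace X] (F : C(StoneCech X, ℝ)) : Cstar X :=
  ⟨fun x => F (stoneCechUnit x), F.continuous.comp continuous_stoneCechUnit, by
    obtain ⟨M, hM⟩ := isCompact_univ.exists_bound_of_continuousOn F.continuous.continuousOn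
    exact ⟨M, fun x => hM _ (Set.mem_univ _)⟩⟩

theorem ext_restr {X : Type*} [TopologicalSpace X]
    (eX : Cstar X → C(StoneCech X, ℝ)) (heX : ∀ f x, eX f (stoneCechUnit x) = f.1 x)
    (F : C(StoneCech X, ℝ)) : eX (restr F) = F := by
  apply ContinuousMap.coe_injective
  refine denseRange_stoneCechUnit.equalizer (eX _).continuous F.continuous ?_
  funext x
  exact heX _ x

theorem restr_ext {X : Type*} [TopologicalSpace X]
    (eX : Cstar X → C(StoneCech X, ℝ)) (heX : ∀ f x, eX f (stoneCechUnit x) = f.1 x)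
    (f : Cstar X) : restr (eX f) = f :=
  Subtype.ext (funext fun x => heX f x)

theorem unif_finite {X Y : Type*} [TopologicalSpace X] [TopologicalSpace Y]
    (φ : Cstar X → Cstar Y) (hφ : UniformContinuous φ) (y : Y) :
    ∃ (I : Set X) (ε : ℝ), I.Finite ∧ 0 < ε ∧ ∀ f g : Cstar X,
      (∀ x ∈ I, |f.1 x - g.1 x| < ε) → |(φ f).1 y - (φ g).1 y| ≤ 1 := by
  have h1 : UniformContinuous fun f : Cstar X => (φ f).1 y :=
    (Pi.uniformContinuous_proj (fun _ : Y => ℝ) y).comp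
      (uniformContinuous_subtype_val.comp hφ)
  have h2 := h1 (Metric.dist_mem_uniformity one_pos)
  rw [Filter.mem_map, uniformity_subtype, Filter.mem_comap] at h2
  obtain ⟨t, ht, hts⟩ := h2
  rw [Pi.uniformity, Filter.mem_iInf] at ht
  obtain ⟨I, hI, V, hV, rfl⟩ := ht
  have h3 : ∀ i : I, ∃ ε : ℝ, 0 < ε ∧ ∀ p : (X → ℝ) × (X → ℝ),
      |p.1 i - p.2 i| < ε → p ∈ V i := by
    intro i
    obtain ⟨u, hu, huV⟩ := Filter.mem_comap.1 (hV i)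
    obtain ⟨ε, hε, hεu⟩ := Metric.mem_uniformity_dist.1 hu
    exact ⟨ε, hε, fun p hp => huV (hεu hp)⟩
  choose ε hε hεV using h3
  haveI := hI.to_subtype
  obtain ⟨δ, hδ, hle⟩ : ∃ δ : ℝ, 0 < δ ∧ ∀ i, δ ≤ ε i := by
    rcases isEmpty_or_nonempty I with h | h
    · exact ⟨1, one_pos, fun i => h.elim i⟩
    · obtain ⟨i, hi⟩ := Finite.exists_min ε
      exact ⟨ε i, hε i, hi⟩
  refine ⟨I, δ, hI, hδ, fun f g hfg => ?_⟩
  have : (f, g) ∈ _ := hts (show (f, g) ∈ _ from Set.mem_iInter.2 fun i =>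
    hεV i (f.1, g.1) ((hfg i i.2).trans_le (hle i)))
  exact le_of_lt this

theorem bd_of_aFn {X Y : Type*} [TopologicalSpace X] [TopologicalSpace Y]
    (eX : Cstar X → C(StoneCech X, ℝ)) (heX : ∀ f x, eX f (stoneCechUnit x) = f.1 x)
    (eY : Cstar Y → C(StoneCech Y, ℝ)) (φ : Cstar X → Cstar Y) (y : StoneCech Y)
    (K : Set (StoneCech X)) (h : aFn eX eY φ y K < ⊤) :
    Bd (fun F => eY (φ (restr F))) y K := by
  refine ⟨(aFn eX eY φ y K).toReal, fun F G hFG => ?_⟩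
  rw [← ENNReal.ofReal_le_iff_le_toReal h.ne]
  exact le_iSup₂_of_le (f := fun (p : Cstar X × Cstar X)
    (_ : ∀ x ∈ K, |eX p.1 x - eX p.2 x| < 1) =>
      ENNReal.ofReal |eY (φ p.1) y - eY (φ p.2) y|) (restr F, restr G)
    (by simpa only [ext_restr eX heX] using hFG) le_rfl

/-- Let `X`, `Y` be pseudocompact Tychonoff spaces and `φ : C*_p(X) → C*_p(Y)` a uniform
homeomorphism with inverse `ψ`. For every `x ∈ βX` there is `y ∈ K(x)` with `x ∈ K(y)`,
where `K(x) ⊆ βY` is the support defined via `ψ = φ⁻¹` and `K(y) ⊆ βX` the support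
defined via `φ`. -/
theorem exists_mem_support_back
    {X Y : Type*} [TopologicalSpace X] [T35Space X] [TopologicalSpace Y] [T35Space Y]
    (φ : Cstar X → Cstar Y) (ψ : Cstar Y → Cstar X)
    (hφ : UniformContinuous φ) (hψ : UniformContinuous ψ)
    (hinv₁ : Function.LeftInverse ψ φ) (hinv₂ : Function.RightInverse ψ φ)
    (eX : Cstar X → C(StoneCech X, ℝ)) (heX : ∀ f x, eX f (stoneCechUnit x) = f.1 x)
    (eY : Cstar Y → C(StoneCech Y, ℝ)) (heY : ∀ g y, eY g (stoneCechUnit y) = g.1 y)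
    (hXpc : ∀ f : X → ℝ, Continuous f → ∃ M : ℝ, ∀ x, |f x| ≤ M)
    (hYpc : ∀ f : Y → ℝ, Continuous f → ∃ M : ℝ, ∀ y, |f y| ≤ M) :
    ∀ x : StoneCech X,
      ∃ y ∈ ⋂₀ {K : Set (StoneCech Y) | IsCompact K ∧ aFn eY eX ψ x K < ⊤},
        x ∈ ⋂₀ {K : Set (StoneCech X) | IsCompact K ∧ aFn eX eY φ y K < ⊤} := by
  intro x
  let Φ : C(StoneCech X, ℝ) → C(StoneCech Y, ℝ) := fun F => eY (φ (restr F))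
  let Ψ : C(StoneCech Y, ℝ) → C(StoneCech X, ℝ) := fun F => eX (ψ (restr F))
  have hΨΦ : ∀ F, Ψ (Φ F) = F := by
    intro F
    simp only [Φ, Ψ]
    rw [restr_ext eY heY, hinv₁, ext_restr eX heX]
  have hfin : ∃ K : Set (StoneCech Y), K.Finite ∧ Bd Ψ x K := by
    refine finite_bd Ψ (Set.range stoneCechUnit) (gdelta_meets hXpc) ?_ x
    rintro _ ⟨z, rfl⟩
    obtain ⟨I, ε, hI, hε, h⟩ := unif_finite ψ hψ z
    refine ⟨stoneCechUnit '' I, hI.image _, ?_⟩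
    obtain ⟨n, hn⟩ := exists_nat_ge (1 / ε)
    refine ⟨(n + 1) * 1, fun F G hFG => ?_⟩
    refine chain_bd Ψ (stoneCechUnit z) (stoneCechUnit '' I) ε 1 (fun F G hFG => ?_) n F G
      (fun w hw => (hFG w hw).trans_le ?_)
    · simp only [Ψ, heX]
      exact h _ _ (fun w hw => hFG _ ⟨w, hw, rfl⟩)
    · rw [div_le_iff₀ hε] at hn
      linarith
  obtain ⟨K, ⟨C, hC⟩, hmin⟩ := exists_min_bd Ψ x hfin
  by_contra hcon
  have h1 : ∀ y : StoneCech Y, ∃ (L : Set (StoneCech X)) (D : ℝ), y ∈ K →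
      IsClosed L ∧ x ∉ L ∧ ∀ F G : C(StoneCech X, ℝ), (∀ x ∈ L, |F x - G x| < 1) →
        |Φ F y - Φ G y| ≤ D := by
    intro y
    by_contra hy
    push Not at hy
    refine hcon ⟨y, ?_, ?_⟩
    · rintro L ⟨hL, hb⟩
      exact hmin L hL.isClosed (bd_of_aFn eY heY eX ψ x L hb) (hy ∅ 0).1
    · rintro L ⟨hL, hb⟩
      obtain ⟨D, hD⟩ := bd_of_aFn eX heX eY φ y L hb
      by_contra hxL
      obtain ⟨F, G, h2, h3⟩ := (hy L D).2 hL.isClosed hxL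
      exact absurd (hD F G h2) (not_le.2 h3)
  choose L D hLD using h1
  obtain ⟨n, hn⟩ := exists_nat_ge (∑ y ∈ K, |D y|)
  have hcl : IsClosed (⋃ y ∈ K, L y) :=
    K.finite_toSet.isClosed_biUnion fun y hy => (hLD y hy).1
  obtain ⟨u, u0, u1, -⟩ := exists_continuous_zero_one_of_isClosed hcl
    (isClosed_singleton (x := x)) (by
      rw [Set.disjoint_singleton_right]
      simp only [Set.mem_iUnion, not_exists]
      exact fun y hy => (hLD y hy).2.1)
  have hux : u x = 1 := u1 rfl
  let G : C(StoneCech X, ℝ) := ((n + 1) * C + 1) • u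
  have h2 := chain_bd Ψ x K 1 C hC n (Φ G) (Φ 0) (by
    intro y hy
    have h3 := (hLD y hy).2.2 G 0 (fun w hw => by
      have : u w = 0 := u0 (Set.mem_biUnion hy hw)
      simp [G, this])
    have h4 : |D y| ≤ ∑ y ∈ K, |D y| :=
      Finset.single_le_sum (f := fun y => |D y|) (fun _ _ => abs_nonneg _) hy
    have := le_abs_self (D y)
    linarith)
  rw [hΨΦ, hΨΦ] at h2
  have h5 := (le_abs_self _).trans h2
  simp [G, hux] at h5
  linarith
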